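/- Let N ≥ 2, x₀ ∈ ℝ^N, R > 0 and r₀ > 0, and let B = B_R(x₀) be the open ball of radius R centered at x₀. Let φ : (0,∞) → [0,∞) and f : (0,∞) → (0,∞) be continuous functions such that liminf_{t→0⁺} f(t) > 0 and ∫₀¹ r·φ(r) dr = ∞. Then there is no C² positive solution u of the inequality −Δu ≥ φ(dist(x, ∂B)) f(u) on the open annulus {x ∈ ℝ^N : R < |x − x₀| < R + 2r₀}. -/

import Mathlib

open Metric Set MeasureTheory Filter

noncomputable def laplacian {N : ℕ} (u : EuclideanSpace ℝ (Fin N) → ℝ)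
    (x : EuclideanSpace ℝ (Fin N)) : ℝ :=
  ∑ i, iteratedFDeriv ℝ 2 u x ![EuclideanSpace.single i 1, EuclideanSpace.single i 1]

/-!
Write `ρ = |x - x₀|` and let `u` be a positive supersolution. The function `exp (-α ρ)` is strictly
subharmonic on `ρ ≥ R` once `α` is large, so comparing `u` with multiples of it shows that the
minima of `u` over the spheres `ρ = r` stay bounded as `r → R`. At the points where these minima
are attained, `f (u) ≥ c > 0`, so `-Δu ≥ c φ(ρ - R)`. Let `W'' = φ` on `(0, b]` with
`W(b) = W'(b) = 0`. Since `W' ≤ 0`, `Δ(W(ρ - R)) ≤ φ(ρ - R)`, so `u + c W(ρ - R)` satisfies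
`Δ ≤ 0` at its minimum points on each sphere; as the comparison function is radial, the comparison
only ever looks at such points. It therefore applies again and bounds `W` near `0`,
whereas `W(t) ≥ ½ ∫_{2t}^b s φ(s) ds → ∞` as `t → 0`.
-/

open Module (finrank)
open scoped InnerProductSpace Laplacian Topology

theorem deriv_deriv_nonneg_of_isLocalMin {h : ℝ → ℝ} {t₀ : ℝ} (hc : ContinuousAt h t₀)
    (hmin : IsLocalMin h t₀) : 0 ≤ deriv (deriv h) t₀ := by
  by_contra! hneg
  have hmax : IsLocalMax h t₀ := isLocalMax_of_deriv_deriv_neg hneg hmin.deriv_eq_zero hc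
  have hconst : h =ᶠ[𝓝 t₀] fun _ => h t₀ := by
    filter_upwards [hmin, hmax] with t hle hge using le_antisymm hge hle
  have hzero : deriv (deriv h) t₀ = 0 := by simpa using hconst.deriv.deriv_eq
  exact hneg.ne hzero

theorem deriv_deriv_comp_add_smul {E F : Type*} [NormedAddCommGroup E] [NormedSpace ℝ E]
    [NormedAddCommGroup F] [NormedSpace ℝ F] {u : E → F} {x : E} (hu : ContDiffAt ℝ 2 u x) (v : E) :
    deriv (deriv fun t : ℝ => u (x + t • v)) 0 = iteratedFDeriv ℝ 2 u x ![v, v] := by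
  have hline (t : ℝ) : HasDerivAt (fun t : ℝ => x + t • v) v t := by
    simpa using ((hasDerivAt_id t).smul_const v).const_add x
  have htendsto : Tendsto (fun t : ℝ => x + t • v) (𝓝 0) (𝓝 x) := by
    simpa using (hline 0).continuousAt.tendsto
  have hdiff : ∀ᶠ y in 𝓝 x, DifferentiableAt ℝ u y := by
    filter_upwards [hu.eventually (by simp)] with y hy using hy.differentiableAt (by norm_num)
  have hderiv : deriv (fun t : ℝ => u (x + t • v)) =ᶠ[𝓝 0] fun t => fderiv ℝ u (x + t • v) v := by
    filter_upwards [htendsto.eventually hdiff] with t ht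
    exact (ht.hasFDerivAt.comp_hasDerivAt t (hline t)).deriv
  have hfderiv : HasFDerivAt (fderiv ℝ u) (fderiv ℝ (fderiv ℝ u) x) (x + (0 : ℝ) • v) := by
    rw [zero_smul, add_zero]
    exact ((hu.fderiv_right (m := 1) (by norm_num)).differentiableAt (by norm_num)).hasFDerivAt
  have hcomp : HasDerivAt (fun t : ℝ => fderiv ℝ u (x + t • v)) (fderiv ℝ (fderiv ℝ u) x v) 0 :=
    hfderiv.comp_hasDerivAt (0 : ℝ) (hline 0)
  have happly : HasDerivAt (fun t : ℝ => fderiv ℝ u (x + t • v) v) (fderiv ℝ (fderiv ℝ u) x v v)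
      0 :=
    (ContinuousLinearMap.apply ℝ F v).hasFDerivAt.comp_hasDerivAt (0 : ℝ) hcomp
  rw [hderiv.deriv_eq, happly.deriv, iteratedFDeriv_two_apply]
  rfl

theorem infDist_sphere_of_le_dist {E : Type*} [NormedAddCommGroup E] [NormedSpace ℝ E]
    {x x₀ : E} {R : ℝ} (hR : 0 ≤ R) (hx : R ≤ dist x x₀) :
    infDist x (sphere x₀ R) = dist x x₀ - R := by
  have hcancel : R / dist x x₀ * dist x x₀ = R :=
    div_mul_cancel_of_imp fun h => le_antisymm (h ▸ hx) hR
  have hratio : R / dist x x₀ ≤ 1 := div_le_one_of_le₀ hx dist_nonneg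
  have hmem : AffineMap.lineMap x₀ x (R / dist x x₀) ∈ sphere x₀ R := by
    rw [mem_sphere, dist_lineMap_left, Real.norm_of_nonneg (by positivity), dist_comm x₀, hcancel]
  refine le_antisymm ((infDist_le_dist_of_mem hmem).trans_eq ?_) ((le_infDist ⟨_, hmem⟩).2 ?_)
  · rw [dist_right_lineMap, Real.norm_of_nonneg (by linarith), dist_comm x₀, sub_mul, hcancel,
      one_mul]
  · intro y hy
    linarith [dist_triangle x y x₀, mem_sphere.1 hy]

theorem exists_pos_forall_mem_Ioc_le {f : ℝ → ℝ} (hfcont : ContinuousOn f (Ioi 0))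
    (hfpos : ∀ t, 0 < t → 0 < f t)
    (hliminf : ∃ ε : ℝ, 0 < ε ∧ ∀ᶠ t in 𝓝[>] (0 : ℝ), ε ≤ f t) (M : ℝ) :
    ∃ c > 0, ∀ t ∈ Ioc 0 M, c ≤ f t := by
  obtain ⟨ε, hε, hev⟩ := hliminf
  obtain ⟨δ, hδ, hsub⟩ := mem_nhdsGT_iff_exists_Ioo_subset.1 hev
  obtain ⟨c, hc, hcle⟩ := (isCompact_Icc (a := δ) (b := M)).exists_forall_le' (a := 0)
    (hfcont.mono fun t ht => hδ.trans_le ht.1) fun t ht => hfpos t (hδ.trans_le ht.1)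
  refine ⟨min ε c, lt_min hε hc, fun t ht => ?_⟩
  rcases lt_or_ge t δ with h | h
  · exact (min_le_left _ _).trans (hsub ⟨ht.1, h⟩)
  · exact (min_le_right _ _).trans (hcle t ⟨h, ht.2⟩)

/-- The second antiderivative of `φ` that vanishes at `b` together with its first derivative, written
as a single integral by Taylor's formula. Composed with `dist · x₀ - R` it is the function added to
a supersolution in the comparison argument. -/
noncomputable def secondPrimitive (φ : ℝ → ℝ) (b t : ℝ) : ℝ :=
  ∫ s in t..b, (s - t) * φ s

section SecondPrimitive

variable {φ : ℝ → ℝ} {b t : ℝ}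

theorem intervalIntegrable_of_continuousOn_Ioi (hφ : ContinuousOn φ (Ioi 0)) (ht : 0 < t)
    (hb : 0 < b) : IntervalIntegrable φ volume t b :=
  (hφ.mono fun _ hs => (lt_min ht hb).trans_le hs.1).intervalIntegrable

theorem hasDerivAt_integral_left_of_continuousOn_Ioi (hφ : ContinuousOn φ (Ioi 0)) (ht : 0 < t)
    (hb : 0 < b) : HasDerivAt (fun t => ∫ s in t..b, φ s) (-φ t) t :=
  intervalIntegral.integral_hasDerivAt_left (intervalIntegrable_of_continuousOn_Ioi hφ ht hb)
    (hφ.stronglyMeasurableAtFilter isOpen_Ioi t ht) (hφ.continuousAt (Ioi_mem_nhds ht))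

theorem secondPrimitive_eq_sub (hφ : ContinuousOn φ (Ioi 0)) (ht : 0 < t) (hb : 0 < b) :
    secondPrimitive φ b t = (∫ s in t..b, s * φ s) - t * ∫ s in t..b, φ s := by
  have hint := intervalIntegrable_of_continuousOn_Ioi hφ ht hb
  have hint_mul : IntervalIntegrable (fun s => s * φ s) volume t b :=
    intervalIntegrable_of_continuousOn_Ioi (continuousOn_id.mul hφ) ht hb
  simp only [secondPrimitive, sub_mul]
  rw [intervalIntegral.integral_sub hint_mul (hint.const_mul t),
    intervalIntegral.integral_const_mul]

theorem hasDerivAt_secondPrimitive (hφ : ContinuousOn φ (Ioi 0)) (ht : 0 < t) (hb : 0 < b) :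
    HasDerivAt (secondPrimitive φ b) (-∫ s in t..b, φ s) t := by
  have hmul : ContinuousOn (fun s => s * φ s) (Ioi 0) := continuousOn_id.mul hφ
  have hderiv := (hasDerivAt_integral_left_of_continuousOn_Ioi hmul ht hb).sub
    ((hasDerivAt_id t).mul (hasDerivAt_integral_left_of_continuousOn_Ioi hφ ht hb))
  refine (hderiv.congr_deriv (by simp)).congr_of_eventuallyEq ?_
  filter_upwards [Ioi_mem_nhds ht] with s hs using secondPrimitive_eq_sub hφ hs hb

theorem contDiffAt_secondPrimitive (hφ : ContinuousOn φ (Ioi 0)) (ht : 0 < t) (hb : 0 < b) :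
    ContDiffAt ℝ 2 (secondPrimitive φ b) t := by
  have hprim : ContDiffOn ℝ 1 (fun t => ∫ s in t..b, φ s) (Ioi 0) := by
    rw [show (1 : WithTop ℕ∞) = 0 + 1 from rfl, contDiffOn_succ_iff_deriv_of_isOpen isOpen_Ioi]
    have hderiv (t : ℝ) (ht : 0 < t) := hasDerivAt_integral_left_of_continuousOn_Ioi hφ ht hb
    refine ⟨fun t ht => (hderiv t ht).differentiableAt.differentiableWithinAt, by simp, ?_⟩
    exact contDiffOn_zero.2 (hφ.neg.congr fun t ht => (hderiv t ht).deriv)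
  suffices ContDiffOn ℝ 2 (secondPrimitive φ b) (Ioi 0) from this.contDiffAt (Ioi_mem_nhds ht)
  rw [show (2 : WithTop ℕ∞) = 1 + 1 from rfl, contDiffOn_succ_iff_deriv_of_isOpen isOpen_Ioi]
  have hderiv (t : ℝ) (ht : 0 < t) := hasDerivAt_secondPrimitive hφ ht hb
  refine ⟨fun t ht => (hderiv t ht).differentiableAt.differentiableWithinAt, by simp, ?_⟩
  exact hprim.neg.congr fun t ht => (hderiv t ht).deriv

theorem integral_mul_le_two_mul_secondPrimitive (hφ : ContinuousOn φ (Ioi 0))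
    (hφ₀ : ∀ s, 0 < s → 0 ≤ φ s) (ht : 0 < t) (htb : 2 * t ≤ b) :
    ∫ s in (2 * t)..b, s * φ s ≤ 2 * secondPrimitive φ b t := by
  have hint {p q : ℝ} {ψ : ℝ → ℝ} (hψ : ContinuousOn ψ (Ioi 0)) (hp : t ≤ p) (hq : t ≤ q) :=
    intervalIntegrable_of_continuousOn_Ioi hψ (ht.trans_le hp) (ht.trans_le hq)
  have hmul : ContinuousOn (fun s => s * φ s) (Ioi 0) := continuousOn_id.mul hφ
  have hshift : ContinuousOn (fun s => (s - t) * φ s) (Ioi 0) :=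
    (continuousOn_id.sub continuousOn_const).mul hφ
  have hnear : 0 ≤ ∫ s in t..(2 * t), (s - t) * φ s :=
    intervalIntegral.integral_nonneg (by linarith) fun s hs =>
      mul_nonneg (sub_nonneg.2 hs.1) (hφ₀ s (ht.trans_le hs.1))
  have hfar : ∫ s in (2 * t)..b, s * φ s ≤ ∫ s in (2 * t)..b, 2 * ((s - t) * φ s) := by
    refine intervalIntegral.integral_mono_on htb (hint hmul (by linarith) (by linarith))
      ((hint hshift (by linarith) (by linarith)).const_mul 2) fun s hs => ?_
    nlinarith [hs.1, hφ₀ s (by linarith [hs.1])]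
  have hsplit := intervalIntegral.integral_add_adjacent_intervals
    (hint hshift le_rfl (by linarith : t ≤ 2 * t)) (hint hshift (by linarith) (by linarith : t ≤ b))
  rw [intervalIntegral.integral_const_mul] at hfar
  rw [secondPrimitive]
  linarith

theorem integrableOn_Ioc_of_eventually_secondPrimitive_le (hφ : ContinuousOn φ (Ioi 0))
    (hφ₀ : ∀ s, 0 < s → 0 ≤ φ s) (hb : 0 < b) {C : ℝ}
    (hC : ∀ᶠ t in 𝓝[>] (0 : ℝ), secondPrimitive φ b t ≤ C) :
    IntegrableOn (fun s => s * φ s) (Ioc 0 b) := by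
  have hmul : ContinuousOn (fun s => s * φ s) (Ioi 0) := continuousOn_id.mul hφ
  have hsmall : ∀ᶠ t in 𝓝[>] (0 : ℝ), t ∈ Ioo 0 (b / 2) := Ioo_mem_nhdsGT (half_pos hb)
  -- The lower endpoints must be positive for every index, hence the parametrization by `exp`.
  refine integrableOn_Ioc_of_intervalIntegral_norm_bounded_left (l := atBot)
    (a := fun i => 2 * Real.exp i) (I := 2 * C) (fun i => ?_) ?_ ?_
  · have hi : 0 < 2 * Real.exp i := by positivity
    exact (intervalIntegrable_of_continuousOn_Ioi hmul hi hb).1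
  · simpa using Real.tendsto_exp_atBot.const_mul 2
  filter_upwards [Real.tendsto_exp_atBot_nhdsGT.eventually (hC.and hsmall)] with i ⟨hCi, hi, hib⟩
  have hle : 2 * Real.exp i ≤ b := by linarith
  calc ∫ s in Ioc (2 * Real.exp i) b, ‖s * φ s‖
      = ∫ s in Ioc (2 * Real.exp i) b, s * φ s := by
        refine setIntegral_congr_fun measurableSet_Ioc fun s hs => Real.norm_of_nonneg ?_
        have hs₀ : 0 < s := by linarith [hs.1]
        exact mul_nonneg hs₀.le (hφ₀ s hs₀)
    _ = ∫ s in (2 * Real.exp i)..b, s * φ s := (intervalIntegral.integral_of_le hle).symm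
    _ ≤ 2 * secondPrimitive φ b (Real.exp i) :=
        integral_mul_le_two_mul_secondPrimitive hφ hφ₀ hi hle
    _ ≤ 2 * C := by linarith

theorem frequently_lt_secondPrimitive (hφ : ContinuousOn φ (Ioi 0))
    (hφ₀ : ∀ s, 0 < s → 0 ≤ φ s) {a : ℝ}
    (hdiv : ¬ IntegrableOn (fun s => s * φ s) (Ioo 0 a)) (hb : 0 < b) (C : ℝ) :
    ∃ᶠ t in 𝓝[>] (0 : ℝ), C < secondPrimitive φ b t := by
  refine fun hC => hdiv ?_
  simp only [not_lt] at hC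
  have hmul : ContinuousOn (fun s => s * φ s) (Icc b a) :=
    continuousOn_id.mul (hφ.mono fun s hs => hb.trans_le hs.1)
  refine ((integrableOn_Ioc_of_eventually_secondPrimitive_le hφ hφ₀ hb hC).union
    hmul.integrableOn_Icc).mono_set fun s hs => ?_
  exact (le_total s b).imp (fun h => ⟨hs.1, h⟩) fun h => ⟨h, hs.2.le⟩

end SecondPrimitive

theorem isMinOn_sphere_add_comp_dist_iff {E : Type*} [PseudoMetricSpace E] {u : E → ℝ} {x x₀ : E}
    (h : ℝ → ℝ) : IsMinOn (fun y => u y + h (dist y x₀)) (sphere x₀ (dist x x₀)) x ↔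
      IsMinOn u (sphere x₀ (dist x x₀)) x := by
  simp only [isMinOn_iff]
  refine forall₂_congr fun y hy => ?_
  rw [mem_sphere.1 hy, add_le_add_iff_right]

theorem exp_neg_mul_sub_pos {α s t : ℝ} (hα : 0 < α) (hst : s < t) :
    0 < Real.exp (-α * s) - Real.exp (-α * t) := by
  rw [sub_pos, Real.exp_lt_exp]
  nlinarith

/-- The closed region between the spheres of radii `a` and `b` about `x₀`, on which
functions are compared. It is empty if `b < a`, and the closed ball of radius `b` if `a ≤ 0`. -/
def closedAnnulus {E : Type*} [PseudoMetricSpace E] (x₀ : E) (a b : ℝ) : Set E :=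
  {x | dist x x₀ ∈ Icc a b}

theorem isCompact_closedAnnulus {E : Type*} [PseudoMetricSpace E] [ProperSpace E] (x₀ : E)
    (a b : ℝ) : IsCompact (closedAnnulus x₀ a b) :=
  (isCompact_closedBall x₀ b).of_isClosed_subset
    (isClosed_Icc.preimage (continuous_id.dist continuous_const)) fun _ hx => hx.2

theorem dist_eq_of_mem_frontier_closedAnnulus {E : Type*} [PseudoMetricSpace E] {x₀ x : E}
    {a b : ℝ} (hx : x ∈ frontier (closedAnnulus x₀ a b)) : dist x x₀ = a ∨ dist x x₀ = b := by
  have hfrontier : dist x x₀ ∈ frontier (Icc a b) :=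
    (continuous_id.dist continuous_const).frontier_preimage_subset _ hx
  rcases le_or_gt a b with hab | hab
  · simpa [frontier_Icc hab] using hfrontier
  · simp [Icc_eq_empty_of_lt hab] at hfrontier

section InnerProductSpace

variable {E : Type*} [NormedAddCommGroup E] [InnerProductSpace ℝ E]

theorem hasFDerivAt_comp_dist {g : ℝ → ℝ} {g' : ℝ} {x x₀ : E} (hx : x ≠ x₀)
    (hg : HasDerivAt g g' (dist x x₀)) :
    HasFDerivAt (fun y => g (dist y x₀)) ((g' / dist x x₀) • innerSL ℝ (x - x₀)) x := by
  have hpos : dist x x₀ ≠ 0 := dist_ne_zero.2 hx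
  have hdist : HasFDerivAt (fun y => dist y x₀) ((dist x x₀)⁻¹ • innerSL ℝ (x - x₀)) x := by
    have hsq : HasFDerivAt (fun y => ‖y - x₀‖ ^ 2) (2 • innerSL ℝ (x - x₀)) x :=
      ((hasFDerivAt_id x).sub_const x₀).norm_sq
    have hsqrt := hsq.sqrt (by simpa [sub_eq_zero] using hx)
    simp only [← dist_eq_norm, Real.sqrt_sq dist_nonneg] at hsqrt
    refine hsqrt.congr_fderiv ?_
    rw [← Nat.cast_smul_eq_nsmul ℝ, smul_smul]
    congr 1
    field_simp
    norm_num
  simpa [smul_smul, div_eq_mul_inv, Function.comp_def] using hg.comp_hasFDerivAt x hdist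

theorem iteratedFDeriv_two_comp_dist {g g' : ℝ → ℝ} {g'' : ℝ} {x x₀ : E} (hx : x ≠ x₀)
    (hg : ∀ᶠ r in 𝓝 (dist x x₀), HasDerivAt g (g' r) r) (hg' : HasDerivAt g' g'' (dist x x₀))
    (v : E) :
    iteratedFDeriv ℝ 2 (fun y => g (dist y x₀)) x ![v, v] =
      (g'' - g' (dist x x₀) / dist x x₀) / dist x x₀ ^ 2 * ⟪x - x₀, v⟫_ℝ ^ 2 +
        g' (dist x x₀) / dist x x₀ * ‖v‖ ^ 2 := by
  have hpos : dist x x₀ ≠ 0 := dist_ne_zero.2 hx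
  have hfderiv : fderiv ℝ (fun y => g (dist y x₀)) =ᶠ[𝓝 x]
      fun y => (g' (dist y x₀) / dist y x₀) • innerSL ℝ (y - x₀) := by
    have hcont : ContinuousAt (fun y => dist y x₀) x := by fun_prop
    filter_upwards [hcont.eventually hg, isOpen_ne.mem_nhds hx] with y hy hne
    exact (hasFDerivAt_comp_dist hne hy).fderiv
  have hcoeff : HasFDerivAt (fun y => g' (dist y x₀) / dist y x₀) _ x :=
    hasFDerivAt_comp_dist hx (hg'.div (hasDerivAt_id _) hpos)
  have hinner : HasFDerivAt (fun y => innerSL ℝ (y - x₀)) (innerSL ℝ : E →L[ℝ] E →L[ℝ] ℝ) x :=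
    (innerSL ℝ : E →L[ℝ] E →L[ℝ] ℝ).hasFDerivAt.comp x ((hasFDerivAt_id x).sub_const x₀)
  rw [iteratedFDeriv_two_apply, hfderiv.fderiv_eq, (hcoeff.fun_smul hinner).fderiv]
  have hself : innerSL ℝ v v = ‖v‖ ^ 2 := real_inner_self_eq_norm_sq v
  simp only [id_eq, mul_one, Fin.isValue, Matrix.cons_val_zero, add_apply, smul_apply,
    ContinuousLinearMap.smulRight_apply, coe_innerSL_apply, smul_eq_mul, Matrix.cons_val_one,
    Matrix.cons_val_fin_one, hself]
  field_simp
  ring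

theorem contDiffAt_secondPrimitive_dist_sub {x x₀ : E} {R b : ℝ} {φ : ℝ → ℝ} (hR : 0 ≤ R)
    (hφ : ContinuousOn φ (Ioi 0)) (hb : 0 < b) (hx : R < dist x x₀) :
    ContDiffAt ℝ 2 (fun y => secondPrimitive φ b (dist y x₀ - R)) x :=
  (contDiffAt_secondPrimitive hφ (sub_pos.2 hx) hb).comp x
    ((contDiffAt_id.dist ℝ contDiffAt_const (dist_pos.1 (hR.trans_lt hx))).sub contDiffAt_const)

variable [FiniteDimensional ℝ E]

theorem laplacian_comp_dist {g g' : ℝ → ℝ} {g'' : ℝ} {x x₀ : E} (hx : x ≠ x₀)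
    (hg : ∀ᶠ r in 𝓝 (dist x x₀), HasDerivAt g (g' r) r) (hg' : HasDerivAt g' g'' (dist x x₀)) :
    (Δ fun y => g (dist y x₀)) x = g'' + (finrank ℝ E - 1) / dist x x₀ * g' (dist x x₀) := by
  have hpos : dist x x₀ ≠ 0 := dist_ne_zero.2 hx
  rw [InnerProductSpace.laplacian_eq_iteratedFDeriv_stdOrthonormalBasis]
  simp only [iteratedFDeriv_two_comp_dist hx hg hg', Finset.sum_add_distrib, ← Finset.mul_sum,
    (stdOrthonormalBasis ℝ E).sum_sq_inner_left, OrthonormalBasis.norm_eq_one, ← dist_eq_norm]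
  simp only [one_pow, Finset.sum_const, Finset.card_univ, Fintype.card_fin, nsmul_eq_mul, mul_one]
  field_simp
  ring

theorem laplacian_nonneg_of_isLocalMin {u : E → ℝ} {x : E} (hu : ContDiffAt ℝ 2 u x)
    (hmin : IsLocalMin u x) : 0 ≤ (Δ u) x := by
  rw [InnerProductSpace.laplacian_eq_iteratedFDeriv_stdOrthonormalBasis]
  refine Finset.sum_nonneg fun i _ => ?_
  set e := stdOrthonormalBasis ℝ E i
  rw [← deriv_deriv_comp_add_smul hu e]
  have hline : ContinuousAt (fun t : ℝ => x + t • e) 0 := by fun_prop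
  have htendsto : Tendsto (fun t : ℝ => x + t • e) (𝓝 0) (𝓝 x) := by simpa using hline.tendsto
  refine deriv_deriv_nonneg_of_isLocalMin ?_ ?_
  · exact hu.continuousAt.comp_of_eq hline (by simp)
  · filter_upwards [htendsto.eventually hmin] with t ht using by simpa using ht

theorem nonneg_of_laplacian_neg {K : Set E} (hK : IsCompact K) {w : E → ℝ}
    (hw : ∀ x ∈ K, ContDiffAt ℝ 2 w x) (hΔ : ∀ x ∈ K, IsMinOn w K x → (Δ w) x < 0)
    (hfrontier : ∀ x ∈ frontier K, 0 ≤ w x) {x : E} (hx : x ∈ K) : 0 ≤ w x := by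
  obtain ⟨z, hzK, hz⟩ := hK.exists_isMinOn ⟨x, hx⟩
    fun y hy => (hw y hy).continuousAt.continuousWithinAt
  suffices hzfrontier : z ∈ frontier K from (hfrontier z hzfrontier).trans (hz hx)
  refine ⟨subset_closure hzK, fun hzint => ?_⟩
  have hnonneg := laplacian_nonneg_of_isLocalMin (hw z hzK)
    (hz.isLocalMin (mem_interior_iff_mem_nhds.1 hzint))
  exact (hΔ z hzK hz).not_ge hnonneg

theorem laplacian_const_mul_exp_sub_pos {α m : ℝ} {x x₀ : E} (hα : 0 < α) (hm : 0 < m)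
    (hx : x ≠ x₀) (hdim : finrank ℝ E - 1 < α * dist x x₀) (c : ℝ) :
    0 < (Δ fun y => m * (Real.exp (-α * dist y x₀) - c)) x := by
  have hpos : 0 < dist x x₀ := dist_pos.2 hx
  have hexp (r : ℝ) : HasDerivAt (fun r => Real.exp (-α * r)) (-α * Real.exp (-α * r)) r := by
    simpa [mul_comm] using ((hasDerivAt_id r).const_mul (-α)).exp
  have hΔ := laplacian_comp_dist hx
    (.of_forall fun r => ((hexp r).sub_const c).const_mul m)
    (((hexp (dist x x₀)).const_mul (-α)).const_mul m)
  have hfactor : 0 < α - (finrank ℝ E - 1) / dist x x₀ := by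
    rwa [sub_pos, div_lt_iff₀ hpos]
  have hfactored : (Δ fun y => m * (Real.exp (-α * dist y x₀) - c)) x =
      m * α * Real.exp (-α * dist x x₀) * (α - (finrank ℝ E - 1) / dist x x₀) := by
    rw [hΔ]
    ring
  rw [hfactored]
  positivity

theorem const_mul_exp_sub_exp_le_of_laplacian_nonpos {v : E → ℝ} {x₀ : E} {a b m α : ℝ}
    (ha : 0 < a) (hα : 0 < α) (hdim : finrank ℝ E - 1 < α * a) (hm : 0 < m)
    (hv : ∀ x ∈ closedAnnulus x₀ a b, ContDiffAt ℝ 2 v x)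
    (hΔ : ∀ x ∈ closedAnnulus x₀ a b, IsMinOn v (sphere x₀ (dist x x₀)) x → (Δ v) x ≤ 0)
    (hinner : ∀ x ∈ sphere x₀ a, m ≤ v x) (houter : ∀ x ∈ sphere x₀ b, 0 ≤ v x)
    {x : E} (hx : x ∈ closedAnnulus x₀ a b) :
    m * (Real.exp (-α * dist x x₀) - Real.exp (-α * b)) ≤ v x := by
  set z : E → ℝ := fun y => m * (Real.exp (-α * dist y x₀) - Real.exp (-α * b)) with hz
  have hne {y : E} (hy : y ∈ closedAnnulus x₀ a b) : y ≠ x₀ := dist_pos.1 (ha.trans_le hy.1)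
  have hzdiff {y : E} (hy : y ∈ closedAnnulus x₀ a b) : ContDiffAt ℝ 2 z y :=
    (((contDiffAt_const.mul (contDiffAt_id.dist ℝ contDiffAt_const (hne hy))).exp).sub
      contDiffAt_const).const_smul m
  have hzΔ {y : E} (hy : y ∈ closedAnnulus x₀ a b) : 0 < (Δ z) y :=
    laplacian_const_mul_exp_sub_pos hα hm (hne hy)
      (hdim.trans_le (by gcongr; exact hy.1)) (Real.exp (-α * b))
  refine sub_nonneg.1 (nonneg_of_laplacian_neg (isCompact_closedAnnulus x₀ a b)
    (w := v - z) (fun y hy => (hv y hy).sub (hzdiff hy)) (fun y hy hmin => ?_) (fun y hy => ?_) hx)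
  · have hvmin : IsMinOn v (sphere x₀ (dist y x₀)) y := fun y' hy' => by
      have hdist : dist y' x₀ = dist y x₀ := hy'
      have hle := hmin (show y' ∈ closedAnnulus x₀ a b by simpa [closedAnnulus, hdist] using hy)
      simpa [hz, hdist] using hle
    rw [(hv y hy).laplacian_sub (hzdiff hy)]
    linarith [hΔ y hy hvmin, hzΔ hy]
  · rcases dist_eq_of_mem_frontier_closedAnnulus hy with hya | hyb
    · have hexp : Real.exp (-α * a) ≤ 1 := Real.exp_le_one_iff.2 (by nlinarith)
      have hzm : m * (Real.exp (-α * a) - Real.exp (-α * b)) ≤ m * 1 := by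
        gcongr
        linarith [Real.exp_pos (-α * b)]
      simp only [Pi.sub_apply, hz, hya]
      linarith [hinner y hya]
    · simpa [hz, hyb] using houter y hyb

variable {u : E → ℝ} {x x₀ : E} {R R' b c : ℝ} {φ : ℝ → ℝ}

theorem exists_forall_isMinOn_sphere_le [Nontrivial E] (hR : 0 < R) (hRb : R < b) (hb : b < R')
    (hu : ∀ x, R < dist x x₀ → dist x x₀ < R' → ContDiffAt ℝ 2 u x)
    (hpos : ∀ x, R < dist x x₀ → dist x x₀ < R' → 0 < u x)
    (hΔ : ∀ x, R < dist x x₀ → dist x x₀ < R' → (Δ u) x ≤ 0) :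
    ∃ M, ∀ x, R < dist x x₀ → dist x x₀ ≤ b → IsMinOn u (sphere x₀ (dist x x₀)) x → u x ≤ M := by
  obtain ⟨b', hb', hbR'⟩ := exists_between hb
  obtain ⟨α, hα, hdim⟩ := exists_pos_lt_mul hR (finrank ℝ E - 1 : ℝ)
  obtain ⟨p, hp⟩ : (sphere x₀ b).Nonempty := NormedSpace.sphere_nonempty.2 (hR.trans hRb).le
  refine ⟨u p / (Real.exp (-α * b) - Real.exp (-α * b')), fun x hx hxb hmin => ?_⟩
  have hmem {y : E} (hy : y ∈ closedAnnulus x₀ (dist x x₀) b') :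
      R < dist y x₀ ∧ dist y x₀ < R' := ⟨hx.trans_le hy.1, hy.2.trans_lt hbR'⟩
  have hle := const_mul_exp_sub_exp_le_of_laplacian_nonpos (hR.trans hx) hα
    (hdim.trans (by gcongr)) (hpos x hx (hxb.trans_lt hb))
    (fun y hy => hu y (hmem hy).1 (hmem hy).2)
    (fun y hy _ => hΔ y (hmem hy).1 (hmem hy).2) (fun y hy => hmin hy)
    (fun y hy => (hpos y (by linarith [mem_sphere.1 hy]) (by linarith [mem_sphere.1 hy])).le)
    (x := p) ⟨hxb.trans_eq hp.symm, hp.trans_le hb'.le⟩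
  rwa [le_div_iff₀ (exp_neg_mul_sub_pos hα hb'), ← mem_sphere.1 hp]

theorem laplacian_secondPrimitive_dist_sub_le [Nontrivial E] (hR : 0 ≤ R)
    (hφ : ContinuousOn φ (Ioi 0)) (hφ₀ : ∀ s, 0 < s → 0 ≤ φ s) (hb : 0 < b)
    (hx : R < dist x x₀) (hxb : dist x x₀ ≤ R + b) :
    (Δ fun y => secondPrimitive φ b (dist y x₀ - R)) x ≤ φ (dist x x₀ - R) := by
  have hpos : 0 < dist x x₀ - R := sub_pos.2 hx
  have hderiv : ∀ᶠ r in 𝓝 (dist x x₀), HasDerivAt (fun r => secondPrimitive φ b (r - R))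
      (-∫ s in (r - R)..b, φ s) r := by
    filter_upwards [Ioi_mem_nhds hx] with r hr
    exact (hasDerivAt_secondPrimitive hφ (sub_pos.2 hr) hb).comp_sub_const r R
  have hderiv' : HasDerivAt (fun r => -∫ s in (r - R)..b, φ s) (φ (dist x x₀ - R)) (dist x x₀) :=
    ((hasDerivAt_integral_left_of_continuousOn_Ioi hφ hpos hb).comp_sub_const _ R
      ).fun_neg.congr_deriv (neg_neg _)
  have hint : 0 ≤ ∫ s in (dist x x₀ - R)..b, φ s :=
    intervalIntegral.integral_nonneg (by linarith) fun s hs => hφ₀ s (hpos.trans_le hs.1)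
  have hdim : (1 : ℝ) ≤ finrank ℝ E := by exact_mod_cast Module.finrank_pos (R := ℝ) (M := E)
  have hterm : 0 ≤ (finrank ℝ E - 1) / dist x x₀ * ∫ s in (dist x x₀ - R)..b, φ s :=
    mul_nonneg (div_nonneg (by linarith) dist_nonneg) hint
  rw [laplacian_comp_dist (dist_pos.1 (hR.trans_lt hx)) hderiv hderiv']
  linarith

theorem laplacian_add_const_mul_secondPrimitive_nonpos [Nontrivial E] (hR : 0 ≤ R)
    (hφ : ContinuousOn φ (Ioi 0)) (hφ₀ : ∀ s, 0 < s → 0 ≤ φ s) (hb : 0 < b) (hc : 0 ≤ c)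
    (hx : R < dist x x₀) (hxb : dist x x₀ ≤ R + b) (hu : ContDiffAt ℝ 2 u x)
    (hΔ : c * φ (dist x x₀ - R) ≤ -(Δ u) x) :
    (Δ fun y => u y + c * secondPrimitive φ b (dist y x₀ - R)) x ≤ 0 := by
  have hW := contDiffAt_secondPrimitive_dist_sub hR hφ hb hx
  have hsum : (Δ fun y => u y + c * secondPrimitive φ b (dist y x₀ - R)) x =
      (Δ u) x + c * (Δ fun y => secondPrimitive φ b (dist y x₀ - R)) x := by
    rw [← smul_eq_mul c, ← InnerProductSpace.laplacian_smul c hW]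
    exact hu.laplacian_add (hW.const_smul c)
  have hle := mul_le_mul_of_nonneg_left
    (laplacian_secondPrimitive_dist_sub_le hR hφ hφ₀ hb hx hxb) hc
  linarith

theorem exists_forall_secondPrimitive_le [Nontrivial E] (hR : 0 < R) (hb : 0 < b)
    (hφ : ContinuousOn φ (Ioi 0)) (hφ₀ : ∀ s, 0 < s → 0 ≤ φ s) (hc : 0 < c)
    (hu : ∀ x, R < dist x x₀ → dist x x₀ ≤ R + b → ContDiffAt ℝ 2 u x)
    (hpos : ∀ x, R < dist x x₀ → dist x x₀ ≤ R + b → 0 ≤ u x)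
    (hΔ : ∀ x, R < dist x x₀ → dist x x₀ ≤ R + b → IsMinOn u (sphere x₀ (dist x x₀)) x →
      c * φ (dist x x₀ - R) ≤ -(Δ u) x) :
    ∃ C, ∀ ε ∈ Ioo 0 (b / 2), secondPrimitive φ b ε ≤ C := by
  obtain ⟨α, hα, hdim⟩ := exists_pos_lt_mul hR (finrank ℝ E - 1 : ℝ)
  obtain ⟨p, hp⟩ : (sphere x₀ (R + b / 2)).Nonempty :=
    NormedSpace.sphere_nonempty.2 (by positivity)
  set v : E → ℝ := fun y => u y + c * secondPrimitive φ b (dist y x₀ - R) with hv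
  set z := Real.exp (-α * (R + b / 2)) - Real.exp (-α * (R + b)) with hz
  have hzpos : 0 < z := exp_neg_mul_sub_pos hα (by linarith)
  refine ⟨max 0 (v p / (c * z)), fun ε ⟨hε, hεb⟩ => le_max_iff.2 ?_⟩
  refine (le_or_gt (secondPrimitive φ b ε) 0).imp_right fun hW => ?_
  have hmem {y : E} (hy : y ∈ closedAnnulus x₀ (R + ε) (R + b)) :
      R < dist y x₀ ∧ dist y x₀ ≤ R + b := ⟨by linarith [hy.1], hy.2⟩
  have hvdiff {y : E} (hy : y ∈ closedAnnulus x₀ (R + ε) (R + b)) : ContDiffAt ℝ 2 v y :=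
    (hu y (hmem hy).1 (hmem hy).2).add
      ((contDiffAt_secondPrimitive_dist_sub hR.le hφ hb (hmem hy).1).const_smul c)
  have hvΔ {y : E} (hy : y ∈ closedAnnulus x₀ (R + ε) (R + b))
      (hmin : IsMinOn v (sphere x₀ (dist y x₀)) y) : (Δ v) y ≤ 0 := by
    have humin : IsMinOn u (sphere x₀ (dist y x₀)) y :=
      (isMinOn_sphere_add_comp_dist_iff fun r => c * secondPrimitive φ b (r - R)).1 hmin
    obtain ⟨hy, hyb⟩ := hmem hy
    exact laplacian_add_const_mul_secondPrimitive_nonpos hR.le hφ hφ₀ hb hc.le hy hyb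
      (hu y hy hyb) (hΔ y hy hyb humin)
  have hinner (y : E) (hy : y ∈ sphere x₀ (R + ε)) : c * secondPrimitive φ b ε ≤ v y := by
    simpa [hv, mem_sphere.1 hy] using hpos y (by linarith [mem_sphere.1 hy])
      (by linarith [mem_sphere.1 hy])
  have houter (y : E) (hy : y ∈ sphere x₀ (R + b)) : 0 ≤ v y := by
    simpa [hv, mem_sphere.1 hy, secondPrimitive] using hpos y (by linarith [mem_sphere.1 hy])
      (mem_sphere.1 hy).le
  have hle := const_mul_exp_sub_exp_le_of_laplacian_nonpos (by positivity) hα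
    (hdim.trans (by gcongr; linarith)) (mul_pos hc hW) (fun y => hvdiff) (fun y => hvΔ) hinner
    houter (x := p) ⟨by linarith [mem_sphere.1 hp], by linarith [mem_sphere.1 hp]⟩
  rw [mem_sphere.1 hp, ← hz] at hle
  rw [le_div_iff₀ (by positivity)]
  linarith

theorem integrableOn_Ioo_of_forall_exists_mul_le_neg_laplacian [Nontrivial E] (hR : 0 < R)
    (hR' : R < R') (hφ : ContinuousOn φ (Ioi 0)) (hφ₀ : ∀ s, 0 < s → 0 ≤ φ s)
    (hu : ∀ x, R < dist x x₀ → dist x x₀ < R' → ContDiffAt ℝ 2 u x)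
    (hpos : ∀ x, R < dist x x₀ → dist x x₀ < R' → 0 < u x)
    (hlower : ∀ M, ∃ c > 0, ∀ x, R < dist x x₀ → dist x x₀ < R' → u x ≤ M →
      c * φ (dist x x₀ - R) ≤ -(Δ u) x) (a : ℝ) :
    IntegrableOn (fun s => s * φ s) (Ioo 0 a) := by
  by_contra hdiv
  obtain ⟨b, hRb, hbR'⟩ := exists_between hR'
  have hΔ (x) (hx : R < dist x x₀) (hxR' : dist x x₀ < R') : (Δ u) x ≤ 0 := by
    obtain ⟨c, hc, hle⟩ := hlower (u x)
    linarith [hle x hx hxR' le_rfl, mul_nonneg hc.le (hφ₀ _ (sub_pos.2 hx))]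
  obtain ⟨M, hM⟩ := exists_forall_isMinOn_sphere_le hR hRb hbR' hu hpos hΔ
  obtain ⟨c, hc, hle⟩ := hlower M
  obtain ⟨C, hC⟩ := exists_forall_secondPrimitive_le hR (sub_pos.2 hRb) hφ hφ₀ hc
    (fun x hx hxb => hu x hx (by linarith)) (fun x hx hxb => (hpos x hx (by linarith)).le)
    (fun x hx hxb hmin => hle x hx (by linarith) (hM x hx (by linarith) hmin))
  obtain ⟨ε, hlt, hε⟩ := ((frequently_lt_secondPrimitive hφ hφ₀ hdiv (sub_pos.2 hRb)
    C).and_eventually (Ioo_mem_nhdsGT (half_pos (sub_pos.2 hRb)))).exists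
  exact (hC ε hε).not_gt hlt

theorem statement_4_general [Nontrivial E] (hR : 0 < R) (hR' : R < R') {f : ℝ → ℝ}
    (hφcont : ContinuousOn φ (Ioi 0)) (hφnonneg : ∀ r, 0 < r → 0 ≤ φ r)
    (hf : ∀ M, ∃ c > 0, ∀ t ∈ Ioc 0 M, c ≤ f t)
    (hdiv : ¬ IntegrableOn (fun r => r * φ r) (Ioo 0 1)) :
    ¬ ∃ u : E → ℝ, ContDiffOn ℝ 2 u {x | R < dist x x₀ ∧ dist x x₀ < R'} ∧
      ∀ x ∈ {x | R < dist x x₀ ∧ dist x x₀ < R'},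
        0 < u x ∧ φ (infDist x (sphere x₀ R)) * f (u x) ≤ -(Δ u) x := by
  rintro ⟨u, hu, hineq⟩
  have hopen : IsOpen {x | R < dist x x₀ ∧ dist x x₀ < R'} :=
    isOpen_Ioo.preimage (continuous_id.dist continuous_const)
  refine hdiv (integrableOn_Ioo_of_forall_exists_mul_le_neg_laplacian hR hR' hφcont hφnonneg
    (fun x hx hxR' => hu.contDiffAt (hopen.mem_nhds ⟨hx, hxR'⟩))
    (fun x hx hxR' => (hineq x ⟨hx, hxR'⟩).1) (fun M => ?_) 1)
  obtain ⟨c, hc, hcf⟩ := hf M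
  refine ⟨c, hc, fun x hx hxR' hxM => ?_⟩
  obtain ⟨hux, hΔ⟩ := hineq x ⟨hx, hxR'⟩
  rw [infDist_sphere_of_le_dist hR.le hx.le, mul_comm] at hΔ
  exact (mul_le_mul_of_nonneg_right (hcf _ ⟨hux, hxM⟩) (hφnonneg _ (sub_pos.2 hx))).trans hΔ

end InnerProductSpace

theorem laplacian_eq {N : ℕ} (u : EuclideanSpace ℝ (Fin N) → ℝ) : laplacian u = Δ u := by
  ext x
  simp [laplacian, InnerProductSpace.laplacian_eq_iteratedFDeriv_orthonormalBasis u
    (EuclideanSpace.basisFun (Fin N) ℝ)]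

/-- Theorem 3.2 (case of a ball): nonexistence in an annulus when the weight is not
integrable at zero. -/
theorem statement_4 {N : ℕ} (hN : 2 ≤ N) (x₀ : EuclideanSpace ℝ (Fin N))
    (R r₀ : ℝ) (hR : 0 < R) (hr₀ : 0 < r₀) (φ f : ℝ → ℝ)
    (hφcont : ContinuousOn φ (Ioi (0:ℝ))) (hφnonneg : ∀ r : ℝ, 0 < r → 0 ≤ φ r)
    (hfcont : ContinuousOn f (Ioi (0:ℝ))) (hfpos : ∀ t : ℝ, 0 < t → 0 < f t)
    (hliminf : ∃ ε : ℝ, 0 < ε ∧ ∀ᶠ t in nhdsWithin (0:ℝ) (Ioi 0), ε ≤ f t)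
    (hdiv : ¬ IntegrableOn (fun r : ℝ => r * φ r) (Ioo (0:ℝ) 1) volume) :
    ¬ ∃ u : EuclideanSpace ℝ (Fin N) → ℝ,
        ContDiffOn ℝ 2 u {x | R < dist x x₀ ∧ dist x x₀ < R + 2 * r₀} ∧
        ∀ x ∈ {x : EuclideanSpace ℝ (Fin N) | R < dist x x₀ ∧ dist x x₀ < R + 2 * r₀},
          0 < u x ∧ φ (infDist x (sphere x₀ R)) * f (u x) ≤ -laplacian u x := by
  have : Nonempty (Fin N) := Fin.pos_iff_nonempty.1 (by lia)
  simpa only [laplacian_eq] using statement_4_general hR (by linarith) hφcont hφnonneg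
    (exists_pos_forall_mem_Ioc_le hfcont hfpos hliminf) hdiv
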